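/- For every x = (x_1,…,x_8) ∈ ℝ⁸ with r = ‖x‖ > 0, the matrix g = (x_8·𝟙 + i x_m Γ_m)/r (sum over m = 1,…,7) is a real orthogonal 8×8 matrix of determinant 1. -/

import Mathlib

/-!
The sum `A = i ∑ xₘ Γₘ` is antisymmetric, and the Clifford relations give `A² = -(∑ xₘ²)·𝟙`.
Hence with `a = x₈`, `(a·𝟙 + A)ᵀ (a·𝟙 + A) = a²·𝟙 - A² = r²·𝟙`, which is the orthogonality.

Orthogonality fixes the determinant only up to sign. The sign comes from an identity of
polynomials: antisymmetry makes `A` and `-A` share a characteristic polynomial `p`, so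
`p² = det (X² - A²) = (X² + ∑ xₘ²)⁸`. Both `p` and `(X² + ∑ xₘ²)⁴` are monic, so they are
equal, and evaluation at `a` gives `det (a·𝟙 + A) = r⁸`.
-/

open Matrix Kronecker

/-- The Pauli matrices. -/
noncomputable def pauli : Fin 3 → Matrix (Fin 2) (Fin 2) ℂ
  | 0 => !![0, 1; 1, 0]
  | 1 => !![0, -Complex.I; Complex.I, 0]
  | 2 => !![1, 0; 0, -1]

/-- The seven 8×8 gamma matrices of the explicit Kronecker-product representation:
`Γ₁ = -σ₂⊗σ₂⊗σ₂, Γ₂ = 𝟙⊗σ₁⊗σ₂, Γ₃ = 𝟙⊗σ₃⊗σ₂, Γ₄ = -σ₁⊗σ₂⊗𝟙, Γ₅ = σ₃⊗σ₂⊗𝟙,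
Γ₆ = σ₂⊗𝟙⊗σ₁, Γ₇ = σ₂⊗𝟙⊗σ₃` (indexed here by `Fin 7`, so `Gamma 0 = Γ₁`, …). -/
noncomputable def Gamma : Fin 7 → Matrix (Fin 2 × Fin 2 × Fin 2) (Fin 2 × Fin 2 × Fin 2) ℂ
  | 0 => -(pauli 1 ⊗ₖ (pauli 1 ⊗ₖ pauli 1))
  | 1 => (1 : Matrix (Fin 2) (Fin 2) ℂ) ⊗ₖ (pauli 0 ⊗ₖ pauli 1)
  | 2 => (1 : Matrix (Fin 2) (Fin 2) ℂ) ⊗ₖ (pauli 2 ⊗ₖ pauli 1)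
  | 3 => -(pauli 0 ⊗ₖ (pauli 1 ⊗ₖ (1 : Matrix (Fin 2) (Fin 2) ℂ)))
  | 4 => pauli 2 ⊗ₖ (pauli 1 ⊗ₖ (1 : Matrix (Fin 2) (Fin 2) ℂ))
  | 5 => pauli 1 ⊗ₖ ((1 : Matrix (Fin 2) (Fin 2) ℂ) ⊗ₖ pauli 0)
  | 6 => pauli 1 ⊗ₖ ((1 : Matrix (Fin 2) (Fin 2) ℂ) ⊗ₖ pauli 2)

section AnticommutingFamily

variable {R A ι : Type*} [CommSemiring R] [Semiring A] [Algebra R A] {e : ι → A}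

theorem sum_smul_mul_self_of_anticommute (hsq : ∀ i, e i * e i = 1)
    (hanti : Pairwise fun i j => e i * e j + e j * e i = 0) (c : ι → R) (s : Finset ι) :
    (∑ i ∈ s, c i • e i) * ∑ i ∈ s, c i • e i = (∑ i ∈ s, c i ^ 2) • (1 : A) := by
  classical
  induction s using Finset.induction_on with
  | empty => simp
  | insert a s ha ih =>
    set S := ∑ i ∈ s, c i • e i with hS
    have hcross : e a * S + S * e a = 0 := by
      rw [hS, Finset.mul_sum, Finset.sum_mul, ← Finset.sum_add_distrib]
      refine Finset.sum_eq_zero fun i hi => ?_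
      rw [mul_smul_comm, smul_mul_assoc, ← smul_add, hanti (ne_of_mem_of_not_mem hi ha).symm,
        smul_zero]
    rw [Finset.sum_insert ha, Finset.sum_insert ha, ← hS]
    calc (c a • e a + S) * (c a • e a + S)
        = c a ^ 2 • (e a * e a) + c a • (e a * S + S * e a) + S * S := by
          simp only [add_mul, mul_add, smul_mul_assoc, mul_smul_comm]
          module
      _ = (c a ^ 2 + ∑ i ∈ s, c i ^ 2) • (1 : A) := by
          rw [hsq, hcross, ih, smul_zero, add_zero, add_smul]

end AnticommutingFamily

section SkewSquareRoot

open Polynomial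

theorem eq_of_monic_of_sq_eq_sq {R : Type*} [CommRing R] [IsDomain R] {p q : R[X]}
    (hp : p.Monic) (hq : q.Monic) (h : p ^ 2 = q ^ 2) : p = q := by
  refine eq_of_monic_of_associated hp hq ?_
  rcases sq_eq_sq_iff_eq_or_eq_neg.1 h with rfl | rfl
  exacts [Associated.refl p, (Associated.refl q).neg_left]

variable {R n : Type*} [CommRing R] [Fintype n] [DecidableEq n] {A : Matrix n n R} {s : R}

theorem transpose_mul_self_smul_one_add_of_skew (hskew : Aᵀ = -A) (hsq : A * A = -(s • 1)) (a : R) :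
    (a • 1 + A)ᵀ * (a • 1 + A) = (a ^ 2 + s) • (1 : Matrix n n R) := by
  calc (a • 1 + A)ᵀ * (a • 1 + A) = (a • 1 - A) * (a • 1 + A) := by
        rw [transpose_add, transpose_smul, transpose_one, hskew, sub_eq_add_neg]
    _ = a ^ 2 • 1 - A * A := by
        simp only [sub_mul, mul_add, smul_mul_assoc, mul_smul_comm, one_mul, mul_one]
        module
    _ = (a ^ 2 + s) • 1 := by rw [hsq, sub_neg_eq_add, add_smul]

theorem charpoly_sq_of_skew_of_mul_self (hskew : Aᵀ = -A) (hsq : A * A = -(s • 1)) :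
    A.charpoly ^ 2 = (X ^ 2 + C s) ^ Fintype.card n := by
  set B : Matrix n n R[X] := C.mapMatrix A with hB
  have hBskew : Bᵀ = -B := by
    rw [hB, RingHom.mapMatrix_apply, ← transpose_map, hskew, ← RingHom.mapMatrix_apply, map_neg,
      RingHom.mapMatrix_apply]
  have hBsq : B * B = -(C s • 1) := by
    rw [hB, ← map_mul, hsq, map_neg, smul_one_eq_diagonal, smul_one_eq_diagonal]
    simp
  have hchar : A.charmatrix = (X : R[X]) • 1 + -B := by
    rw [charmatrix, scalar_apply, ← smul_one_eq_diagonal, sub_eq_add_neg]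
  have hprod : A.charmatrixᵀ * A.charmatrix = (X ^ 2 + C s) • 1 := by
    have hskew' : (-B)ᵀ = -(-B) := by rw [transpose_neg, hBskew]
    have hsq' : -B * -B = -(C s • 1) := by rw [neg_mul_neg, hBsq]
    rw [hchar, transpose_mul_self_smul_one_add_of_skew hskew' hsq']
  calc A.charpoly ^ 2 = (A.charmatrixᵀ * A.charmatrix).det := by
        rw [det_mul, det_transpose, charpoly, sq]
    _ = (X ^ 2 + C s) ^ Fintype.card n := by rw [hprod, det_smul, det_one, mul_one]

variable [IsDomain R]

theorem charpoly_eq_pow_of_skew_of_mul_self (hskew : Aᵀ = -A) (hsq : A * A = -(s • 1)) {k : ℕ}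
    (hk : Fintype.card n = 2 * k) : A.charpoly = (X ^ 2 + C s) ^ k := by
  refine eq_of_monic_of_sq_eq_sq A.charpoly_monic ((monic_X_pow_add_C s two_ne_zero).pow k) ?_
  rw [charpoly_sq_of_skew_of_mul_self hskew hsq, hk, ← pow_mul, mul_comm]

theorem det_smul_one_add_of_skew_of_mul_self (hskew : Aᵀ = -A) (hsq : A * A = -(s • 1)) {k : ℕ}
    (hk : Fintype.card n = 2 * k) (a : R) : (a • 1 + A).det = (a ^ 2 + s) ^ k := by
  calc (a • 1 + A).det = Aᵀ.charpoly.eval a := by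
        rw [eval_charpoly, hskew, sub_neg_eq_add, scalar_apply, smul_one_eq_diagonal]
    _ = (a ^ 2 + s) ^ k := by
        simp [charpoly_transpose, charpoly_eq_pow_of_skew_of_mul_self hskew hsq hk]

end SkewSquareRoot

/-- A family of purely imaginary antisymmetric matrices satisfying the Clifford relations
`γᵢ γⱼ + γⱼ γᵢ = 2 δᵢⱼ 𝟙`, which are split here into the cases `i = j` (divided by 2) and
`i ≠ j`. -/
structure IsImaginaryCliffordFamily {ι n : Type*} [Fintype n] [DecidableEq n]
    (γ : ι → Matrix n n ℂ) : Prop where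
  re_apply : ∀ i a b, (γ i a b).re = 0
  transpose : ∀ i, (γ i)ᵀ = -γ i
  mul_self : ∀ i, γ i * γ i = 1
  anticommute : Pairwise fun i j => γ i * γ j + γ j * γ i = 0

namespace IsImaginaryCliffordFamily

variable {ι n : Type*} [Fintype n] [DecidableEq n] {γ : ι → Matrix n n ℂ} [Fintype ι]

theorem im_smul_one_add_I_smul_sum_apply (hγ : IsImaginaryCliffordFamily γ) (a : ℝ)
    (v : ι → ℝ) (i j : n) :
    (((a : ℂ) • (1 : Matrix n n ℂ) + Complex.I • ∑ m, (v m : ℂ) • γ m) i j).im = 0 := by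
  have hone : ((1 : Matrix n n ℂ) i j).im = 0 := by
    rw [one_apply]
    split_ifs <;> simp
  simp [Matrix.sum_apply, hγ.re_apply, hone]

theorem transpose_I_smul_sum (hγ : IsImaginaryCliffordFamily γ) (v : ι → ℂ) :
    (Complex.I • ∑ i, v i • γ i)ᵀ = -(Complex.I • ∑ i, v i • γ i) := by
  simp [transpose_sum, hγ.transpose]

theorem I_smul_sum_mul_self (hγ : IsImaginaryCliffordFamily γ) (v : ι → ℂ) :
    (Complex.I • ∑ i, v i • γ i) * (Complex.I • ∑ i, v i • γ i) =
      -((∑ i, v i ^ 2) • (1 : Matrix n n ℂ)) := by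
  rw [smul_mul_assoc, mul_smul_comm, smul_smul, Complex.I_mul_I, neg_one_smul,
    sum_smul_mul_self_of_anticommute hγ.mul_self hγ.anticommute]

end IsImaginaryCliffordFamily

theorem g8_orthogonal_general {n : Type*} [Fintype n] [DecidableEq n] {k : ℕ}
    {γ : Fin k → Matrix n n ℂ} (hγ : IsImaginaryCliffordFamily γ) (hn : Even (Fintype.card n))
    (x : EuclideanSpace ℝ (Fin (k + 1))) (hx : ‖x‖ > 0) :
    let g : Matrix n n ℂ :=
      (‖x‖ : ℂ)⁻¹ • ((x (Fin.last k) : ℂ) • (1 : Matrix n n ℂ) +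
        Complex.I • ∑ m : Fin k, (x m.castSucc : ℂ) • γ m)
    (∀ i j, (g i j).im = 0) ∧ gᵀ * g = 1 ∧ g.det = 1 := by
  intro g
  have hnorm : (x (Fin.last k) : ℂ) ^ 2 + ∑ m : Fin k, (x m.castSucc : ℂ) ^ 2 = (‖x‖ : ℂ) ^ 2 := by
    have h := EuclideanSpace.real_norm_sq_eq x
    rw [Fin.sum_univ_castSucc] at h
    rw [add_comm]
    exact_mod_cast h.symm
  have hr : (‖x‖ : ℂ)⁻¹ ^ 2 * (‖x‖ : ℂ) ^ 2 = 1 := by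
    rw [← mul_pow, inv_mul_cancel₀ (Complex.ofReal_ne_zero.2 hx.ne'), one_pow]
  have hskew := hγ.transpose_I_smul_sum fun m => (x m.castSucc : ℂ)
  have hsq := hγ.I_smul_sum_mul_self fun m => (x m.castSucc : ℂ)
  refine ⟨fun i j => ?_, ?_, ?_⟩
  · rw [show g i j = _ from Matrix.smul_apply _ _ i j, smul_eq_mul, ← Complex.ofReal_inv,
      Complex.im_ofReal_mul, hγ.im_smul_one_add_I_smul_sum_apply, mul_zero]
  · rw [transpose_smul, smul_mul_assoc, mul_smul_comm,
      transpose_mul_self_smul_one_add_of_skew hskew hsq, hnorm, smul_smul, smul_smul, ← sq, hr,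
      one_smul]
  · obtain ⟨l, hl⟩ := hn.two_dvd
    rw [det_smul, det_smul_one_add_of_skew_of_mul_self hskew hsq hl, hnorm, hl, pow_mul, ← mul_pow,
      hr, one_pow]

section NegKronecker

variable {R l m n p : Type*} [Mul R] [HasDistribNeg R] (A : Matrix l m R) (B : Matrix n p R)

theorem neg_kronecker : (-A) ⊗ₖ B = -(A ⊗ₖ B) := by
  ext
  simp only [kroneckerMap_apply, Matrix.neg_apply, neg_mul]

theorem kronecker_neg : A ⊗ₖ (-B) = -(A ⊗ₖ B) := by
  ext
  simp only [kroneckerMap_apply, Matrix.neg_apply, mul_neg]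

end NegKronecker

theorem re_apply_eq_zero_of_isHermitian_of_transpose_eq_neg {n : Type*} {A : Matrix n n ℂ}
    (hherm : A.IsHermitian) (hskew : Aᵀ = -A) (a b : n) : (A a b).re = 0 := by
  have h₁ : (A b a).re = (A a b).re := by rw [← hherm.apply a b, Complex.star_def, Complex.conj_re]
  have h₂ : (A b a).re = -(A a b).re := congrArg Complex.re (congrFun₂ hskew a b)
  linarith

theorem pauli_mul_self (i : Fin 3) : pauli i * pauli i = 1 := by
  fin_cases i <;> simp [pauli, one_fin_two]

theorem pauli_mul_pauli_of_ne {i j : Fin 3} (h : i ≠ j) :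
    pauli i * pauli j = -(pauli j * pauli i) := by
  fin_cases i <;> fin_cases j <;> simp_all [pauli]

theorem pauli_isHermitian (i : Fin 3) : (pauli i).IsHermitian := by
  ext a b
  fin_cases i <;> fin_cases a <;> fin_cases b <;> simp [pauli]

theorem pauli_zero_transpose : (pauli 0)ᵀ = pauli 0 := by
  ext a b
  fin_cases a <;> fin_cases b <;> simp [pauli]

theorem pauli_one_transpose : (pauli 1)ᵀ = -pauli 1 := by
  ext a b
  fin_cases a <;> fin_cases b <;> simp [pauli]

theorem pauli_two_transpose : (pauli 2)ᵀ = pauli 2 := by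
  ext a b
  fin_cases a <;> fin_cases b <;> simp [pauli]

theorem Gamma_mul_self (m : Fin 7) : Gamma m * Gamma m = 1 := by
  fin_cases m <;> simp [Gamma, ← mul_kronecker_mul, pauli_mul_self]

theorem Gamma_anticommute : Pairwise fun m n => Gamma m * Gamma n + Gamma n * Gamma m = 0 := by
  have h10 := pauli_mul_pauli_of_ne (i := 1) (j := 0) (by decide)
  have h20 := pauli_mul_pauli_of_ne (i := 2) (j := 0) (by decide)
  have h21 := pauli_mul_pauli_of_ne (i := 2) (j := 1) (by decide)
  intro m n hmn
  fin_cases m <;> fin_cases n <;>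
    first
    | exact absurd rfl hmn
    | simp [Gamma, ← mul_kronecker_mul, h10, h20, h21, pauli_mul_self, neg_kronecker, kronecker_neg]

theorem Gamma_transpose (m : Fin 7) : (Gamma m)ᵀ = -Gamma m := by
  fin_cases m <;>
    simp [Gamma, ← kroneckerMap_transpose, pauli_zero_transpose, pauli_one_transpose,
      pauli_two_transpose, neg_kronecker, kronecker_neg]

theorem Gamma_isHermitian (m : Fin 7) : (Gamma m).IsHermitian := by
  have hpauli (i : Fin 3) : (pauli i)ᴴ = pauli i := pauli_isHermitian i
  fin_cases m <;> simp [Gamma, IsHermitian, conjTranspose_kronecker, hpauli]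

theorem Gamma_isImaginaryCliffordFamily : IsImaginaryCliffordFamily Gamma where
  re_apply m :=
    re_apply_eq_zero_of_isHermitian_of_transpose_eq_neg (Gamma_isHermitian m) (Gamma_transpose m)
  transpose := Gamma_transpose
  mul_self := Gamma_mul_self
  anticommute := Gamma_anticommute

/-- For `x ∈ ℝ⁸` with `r = ‖x‖ > 0`, the matrix `g = (x₈·𝟙 + i xₘ Γₘ)/r` is a real
orthogonal matrix of determinant 1: all its entries are real, `gᵀ g = 𝟙`, and `det g = 1`. -/
theorem g8_orthogonal (x : EuclideanSpace ℝ (Fin 8)) (hx : ‖x‖ > 0) :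
    let g : Matrix (Fin 2 × Fin 2 × Fin 2) (Fin 2 × Fin 2 × Fin 2) ℂ :=
      (‖x‖ : ℂ)⁻¹ •
        ((x 7 : ℂ) • (1 : Matrix (Fin 2 × Fin 2 × Fin 2) (Fin 2 × Fin 2 × Fin 2) ℂ) +
          Complex.I • ∑ m : Fin 7, (x m.castSucc : ℂ) • Gamma m)
    (∀ i j, (g i j).im = 0) ∧ gᵀ * g = 1 ∧ g.det = 1 :=
  g8_orthogonal_general Gamma_isImaginaryCliffordFamily (by decide) x hx
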